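/- arXiv:1510.04873 — 6 statements merged into one kernel-verified Lean document; each statement's English description precedes it below -/
import Mathlib

section
/- Let p : Set α, p' : Set β be predicates and r : α → β → Prop, r' : β → γ → Prop be relations. Then the serial composition {p} ∘ [r] ∘ {p'} ∘ [r'] equals {x | x ∈ p ∧ ∀ y, r x y → y ∈ p'} ∘ [r''], where r'' : α → γ → Prop is the relational composition r'' x z = ∃ y, r x y ∧ r' y z. -/
/-- Assert predicate transformer `{p}`. -/
def assertPT {α : Type*} (p : Set α) : Set α → Set α := fun q => p ∩ q

/-- Nondeterministic update predicate transformer `[r]` for a relation. -/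
def relPT {α β : Type*} (r : α → β → Prop) : Set β → Set α :=
  fun q => {x | ∀ y, r x y → y ∈ q}

/-- Functional update predicate transformer `[f]`. -/
def funPT {α β : Type*} (f : α → β) : Set β → Set α := fun q => f ⁻¹' q

/-- Identity predicate transformer. -/
def IdPT {α : Type*} : Set α → Set α := fun q => q

/-- Parallel composition of predicate transformers. -/
def parPT {α β α' β' : Type*} (S : Set β → Set α) (T : Set β' → Set α') :
    Set (β × β') → Set (α × α') :=
  fun q => {x | ∃ u v, u ×ˢ v ⊆ q ∧ x.1 ∈ S u ∧ x.2 ∈ T v}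

/-- Selection operator used in the definition of feedback. -/
def selPT {α β γ : Type*} (S : Set (γ × β) → Set (γ × α)) : Set γ → Set α :=
  assertPT {x | ∃ u, (u, x) ∈ S Set.univ} ∘
    relPT (fun x ux => ux.2 = x ∧ (ux.1, x) ∈ S Set.univ) ∘ S ∘ funPT Prod.fst

/-- Feedback composition of a predicate transformer. -/
def feedbackPT {α β γ : Type*} (S : Set (γ × β) → Set (γ × α)) : Set β → Set α :=
  funPT (fun x => (x, x)) ∘ parPT (selPT S) IdPT ∘ S ∘ funPT Prod.snd

theorem serial_rel_rel {α β γ : Type*} (p : Set α) (p' : Set β)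
    (r : α → β → Prop) (r' : β → γ → Prop) :
    assertPT p ∘ relPT r ∘ assertPT p' ∘ relPT r' =
      assertPT {x | x ∈ p ∧ ∀ y, r x y → y ∈ p'} ∘
        relPT (fun x z => ∃ y, r x y ∧ r' y z) := by
  ext q x
  constructor
  · rintro ⟨hp, h⟩
    exact ⟨⟨hp, fun y hy => (h y hy).1⟩, fun z ⟨y, hy, hz⟩ => (h y hy).2 z hz⟩
  · rintro ⟨⟨hp, h⟩, hq⟩
    exact ⟨hp, fun y hy => ⟨h y hy, fun z hz => hq z ⟨y, hy, hz⟩⟩⟩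
end

section
/- Let p : Set α, p' : Set α' be predicates and r : α → β → Prop, r' : α' → β' → Prop be relations. Then the parallel composition ({p} ∘ [r]) ∥ ({p'} ∘ [r']) equals {(x, y) | x ∈ p ∧ y ∈ p'} ∘ [r''], where r'' : α × α' → β × β' → Prop is defined by r'' (x, y) (u, v) = r x u ∧ r' y v. -/
theorem parallel_rel_rel {α β α' β' : Type*} (p : Set α) (p' : Set α')
    (r : α → β → Prop) (r' : α' → β' → Prop) :
    parPT (assertPT p ∘ relPT r) (assertPT p' ∘ relPT r') =
      assertPT {xy : α × α' | xy.1 ∈ p ∧ xy.2 ∈ p'} ∘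
        relPT (fun (xy : α × α') (uv : β × β') => r xy.1 uv.1 ∧ r' xy.2 uv.2) := by
  ext q ⟨x, y⟩
  constructor
  · rintro ⟨u, v, huv, ⟨hx, hu⟩, hy, hv⟩
    exact ⟨⟨hx, hy⟩, fun w hw => huv ⟨hu w.1 hw.1, hv w.2 hw.2⟩⟩
  · rintro ⟨⟨hx, hy⟩, h⟩
    -- The smallest postconditions that can be guaranteed are the images of `x` and `y`.
    exact ⟨{u | r x u}, {v | r' y v}, fun w hw => h w hw,
      ⟨hx, fun _ hu => hu⟩, hy, fun _ hv => hv⟩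
end

section
/- Let p : Set α, p' : Set α' be predicates and f : α → β, f' : α' → β' be functions. Then the parallel composition ({p} ∘ [f]) ∥ ({p'} ∘ [f']) equals {(x, y) | x ∈ p ∧ y ∈ p'} ∘ [g], where g : α × α' → β × β' is defined by g (x, y) = (f x, f' y). -/
theorem parallel_fun_fun {α β α' β' : Type*} (p : Set α) (p' : Set α')
    (f : α → β) (f' : α' → β') :
    parPT (assertPT p ∘ funPT f) (assertPT p' ∘ funPT f') =
      assertPT {xy : α × α' | xy.1 ∈ p ∧ xy.2 ∈ p'} ∘
        funPT (fun (xy : α × α') => (f xy.1, f' xy.2)) := by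
  funext q
  ext ⟨x, x'⟩
  constructor
  · rintro ⟨u, v, huv, ⟨hx, hu⟩, ⟨hx', hv⟩⟩
    exact ⟨⟨hx, hx'⟩, huv ⟨hu, hv⟩⟩
  · rintro ⟨⟨hx, hx'⟩, hq⟩
    -- The singleton rectangle at the image point is the smallest one that works.
    refine ⟨{f x}, {f' x'}, ?_, ⟨hx, rfl⟩, ⟨hx', rfl⟩⟩
    rw [Set.singleton_prod_singleton]
    exact Set.singleton_subset_iff.mpr hq
end

section
/- Let p : Set (γ × α) be a predicate, f' : α → γ and f : γ × α → β functions. Then feedback ({p} ∘ [fun (u, x) => (f' x, f (u, x))]) equals {x | (f' x, x) ∈ p} ∘ [fun x => f (f' x, x)]. That is, the feedback of a functional predicate transformer whose first output depends only on the second input accepts input x iff (f' x, x) satisfies p, and then outputs f (f' x, x). -/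
/-- The selection operator of `{p} ∘ [fun (u, x) => (f' x, f (u, x))]`: since the first output
`f' x` does not depend on the fed-back value `u`, the quantification over all admissible `u`
collapses to `f' x ∈ q`. -/
theorem mem_selPT_fun {α β γ : Type*} (p : Set (γ × α)) (f' : α → γ) (f : γ × α → β)
    (q : Set γ) (x : α) :
    x ∈ selPT (assertPT p ∘ funPT (fun ux => (f' ux.2, f ux))) q ↔
      (∃ u, (u, x) ∈ p) ∧ f' x ∈ q := by
  simp only [selPT, assertPT, relPT, funPT, Function.comp, Set.mem_inter_iff, Set.mem_ofPred_eq,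
    Set.mem_preimage, Set.mem_univ, and_true]
  constructor
  · rintro ⟨⟨u, hu⟩, h⟩
    exact ⟨⟨u, hu⟩, (h (u, x) ⟨rfl, hu⟩).2⟩
  · rintro ⟨hu, hq⟩
    refine ⟨hu, ?_⟩
    rintro ⟨u, _⟩ ⟨rfl, h⟩
    exact ⟨h, hq⟩

theorem feedback_fun {α β γ : Type*} (p : Set (γ × α)) (f' : α → γ) (f : γ × α → β) :
    feedbackPT (assertPT p ∘ funPT (fun ux => (f' ux.2, f ux))) =
      assertPT {x | (f' x, x) ∈ p} ∘ funPT (fun x => f (f' x, x)) := by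
  funext q
  ext x
  constructor
  · rintro ⟨U, V, hUV, hU, hV⟩
    exact hUV (Set.mk_mem_prod ((mem_selPT_fun p f' f U x).1 hU).2 hV)
  · rintro ⟨hp, hq⟩
    -- The least rectangle containing `(f' x, x)` suffices.
    refine ⟨{f' x}, {x}, ?_, (mem_selPT_fun p f' f _ x).2 ⟨⟨_, hp⟩, rfl⟩, rfl⟩
    rw [Set.singleton_prod_singleton, Set.singleton_subset_iff]
    exact ⟨hp, hq⟩
end

section
/- Let p : Set (γ × α) be a predicate, f' : α → γ and f : γ × α → β functions, and let S = {p} ∘ [fun (u, x) => (f' x, f (u, x))]. Then sel S = {x | ∃ u, (u, x) ∈ p} ∘ [f']; that is, for a functional predicate transformer whose first output f' x depends only on the second input, the selection operator sel used in the definition of feedback reduces to asserting that some u makes (u, x) legal and then outputting f' x. -/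
theorem sel_fun {α β γ : Type*} (p : Set (γ × α)) (f' : α → γ) (f : γ × α → β) :
    selPT (assertPT p ∘ funPT (fun ux => (f' ux.2, f ux))) =
      assertPT {x | ∃ u, (u, x) ∈ p} ∘ funPT f' := by
  ext q x
  simp only [selPT, assertPT, relPT, funPT, Function.comp_apply, Set.preimage_univ,
    Set.inter_univ, Set.mem_inter_iff, Set.mem_ofPred_eq, Set.mem_preimage]
  constructor
  · rintro ⟨⟨u, hu⟩, h⟩
    exact ⟨⟨u, hu⟩, (h (u, x) ⟨rfl, hu⟩).2⟩
  -- The first output does not depend on `u`, so the postcondition holds for every legal `u`.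
  · rintro ⟨hx, hq⟩
    refine ⟨hx, ?_⟩
    rintro ⟨u, _⟩ ⟨rfl, hu⟩
    exact ⟨hu, hq⟩
end

section
/- The incremental translation of the DelaySum diagram simplifies to a single functional update: over the reals, let Add = [fun (x, y) => x + y] : Set ℝ → Set (ℝ × ℝ), UnitDelay = [fun (x, s) => (s, x)] : Set (ℝ × ℝ) → Set (ℝ × ℝ), Split = [fun x => (x, x)] : Set (ℝ × ℝ) → Set ℝ, and Id the identity transformer. Then feedback ( [fun (f, (e, s)) => ((f, e), s)] ∘ (Add ∥ Id) ∘ UnitDelay ∘ (Split ∥ Id) ∘ [fun ((f, g), s') => (f, (g, s'))] ) = [fun (e, s) => (s, s + e)] as predicate transformers Set (ℝ × ℝ) → Set (ℝ × ℝ). -/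
theorem parPT_funPT {α β α' β' : Type*} (f : α → β) (g : α' → β') :
    parPT (funPT f) (funPT g) = funPT (Prod.map f g) := by
  funext q
  ext ⟨x, y⟩
  constructor
  · rintro ⟨u, v, huv, hx, hy⟩
    exact huv ⟨hx, hy⟩
  · intro h
    refine ⟨{f x}, {g y}, ?_, rfl, rfl⟩
    rintro ⟨a, b⟩ ⟨rfl, rfl⟩
    exact h

/-- When the first output of the update is a function `g` of the external input alone, the selection
operator is the update by `g`: the state it quantifies over is irrelevant, and some state exists. -/
theorem selPT_funPT {α β γ : Type*} (g : α → γ) (h : γ × α → β) :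
    selPT (funPT fun p : γ × α => (g p.2, h p)) = funPT g := by
  funext q
  ext x
  constructor
  · rintro ⟨-, hx⟩
    exact hx (g x, x) ⟨rfl, trivial⟩
  · intro hx
    refine ⟨⟨g x, trivial⟩, ?_⟩
    rintro ⟨u, _⟩ ⟨rfl, -⟩
    exact hx

/-- Feedback of an update whose first output ignores the fed back input substitutes that output
for the fed back input. -/
theorem feedbackPT_funPT {α β γ : Type*} (g : α → γ) (h : γ × α → β) :
    feedbackPT (funPT fun p : γ × α => (g p.2, h p)) = funPT fun x => h (g x, x) := by
  have hId : (IdPT : Set α → Set α) = funPT id := rfl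
  rw [feedbackPT, selPT_funPT, hId, parPT_funPT]
  rfl

theorem delaySum_incremental :
    feedbackPT
      (funPT (fun ((f, e, s) : ℝ × ℝ × ℝ) => ((f, e), s)) ∘
        parPT (funPT (fun ((x, y) : ℝ × ℝ) => x + y)) (IdPT : Set ℝ → Set ℝ) ∘
        funPT (fun ((x, s) : ℝ × ℝ) => (s, x)) ∘
        parPT (funPT (fun (x : ℝ) => (x, x))) (IdPT : Set ℝ → Set ℝ) ∘
        funPT (fun (((f, g), s') : (ℝ × ℝ) × ℝ) => (f, (g, s')))) =
      funPT (fun ((e, s) : ℝ × ℝ) => (s, s + e)) := by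
  have hId : (IdPT : Set ℝ → Set ℝ) = funPT id := rfl
  rw [hId, parPT_funPT, parPT_funPT]
  exact feedbackPT_funPT (fun x : ℝ × ℝ => x.2)
    (fun p : ℝ × ℝ × ℝ => (p.2.2, p.1 + p.2.1))
end
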